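/- (Theorem 2.3, case 2, negative half-line.) Let σ > 0, c > 0 and K < 0, and set h(y) = K·y + c (so h(y) ≥ c > 0 for y ≤ 0). Define F(y) = G(y, σ·h(y)) = (1/√(2π(σ(Ky+c))²)) ∫_{−∞}^{y} exp(−x²/(2(σ(Ky+c))²)) dx. Then F is strictly increasing on (−∞, 0]. -/

import Mathlib

/-- The CDF at `y` of a centered normal distribution with standard deviation `s`. -/
noncomputable def gaussCDF (y s : ℝ) : ℝ :=
  (Real.sqrt (2 * Real.pi * s ^ 2))⁻¹ * ∫ x in Set.Iic y, Real.exp (-x ^ 2 / (2 * s ^ 2))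

/-! By scaling, `gaussCDF y s = Φ (y / s)` for `0 < s`, where `Φ` is the standard normal CDF, which
is strictly increasing. So `y ↦ gaussCDF y (σ * h y)` increases strictly wherever `h` is positive
and `y / h y` does. For `h y = K * y + c`, cross-multiplying `a / h a < b / h b` cancels the terms
in `K` and leaves `c * a < c * b`. -/

open MeasureTheory ProbabilityTheory Set

theorem strictMono_cdf (μ : Measure ℝ) [IsProbabilityMeasure μ] [μ.IsOpenPosMeasure] :
    StrictMono (cdf μ) := by
  intro a b hab
  have hpos : 0 < (cdf μ).measure (Ioc a b) := by
    rw [measure_cdf]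
    exact ((Measure.measure_Ioo_pos μ).2 hab).trans_le (measure_mono Ioo_subset_Ioc_self)
  rwa [StieltjesFunction.measure_Ioc, ENNReal.ofReal_pos, sub_pos] at hpos

theorem cdf_map_div_const (μ : Measure ℝ) [IsProbabilityMeasure μ] {s : ℝ} (hs : 0 < s) (y : ℝ) :
    cdf (μ.map (· / s)) (y / s) = cdf μ y := by
  have hmeas : Measurable (· / s : ℝ → ℝ) := by fun_prop
  have : IsProbabilityMeasure (μ.map (· / s)) := Measure.isProbabilityMeasure_map hmeas.aemeasurable
  have hpre : (· / s) ⁻¹' Iic (y / s) = Iic y := by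
    ext x
    exact div_le_div_iff_of_pos_right hs
  rw [cdf_eq_real, cdf_eq_real, map_measureReal_apply hmeas measurableSet_Iic, hpre]

theorem isOpenPosMeasure_gaussianReal (m : ℝ) {v : NNReal} (hv : v ≠ 0) :
    (gaussianReal m v).IsOpenPosMeasure :=
  (gaussianReal_absolutelyContinuous' m hv).isOpenPosMeasure

theorem gaussCDF_eq_cdf_gaussianReal (y : ℝ) {s : ℝ} (hs : s ≠ 0) :
    gaussCDF y s = cdf (gaussianReal 0 (.mk (s ^ 2) (sq_nonneg s))) y := by
  have hv : NNReal.mk (s ^ 2) (sq_nonneg s) ≠ 0 := NNReal.coe_ne_zero.1 (pow_ne_zero 2 hs)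
  rw [cdf_eq_real, measureReal_def, gaussianReal_apply_eq_integral 0 hv,
    ENNReal.toReal_ofReal (integral_nonneg (gaussianPDFReal_nonneg 0 _))]
  simp only [gaussCDF, gaussianPDFReal, sub_zero, NNReal.coe_mk, integral_const_mul]

theorem gaussCDF_eq_cdf_div (y : ℝ) {s : ℝ} (hs : 0 < s) :
    gaussCDF y s = cdf (gaussianReal 0 1) (y / s) := by
  have hv : NNReal.mk (s ^ 2) (sq_nonneg s) ≠ 0 := NNReal.coe_ne_zero.1 (pow_ne_zero 2 hs.ne')
  rw [gaussCDF_eq_cdf_gaussianReal y hs.ne', ← cdf_map_div_const _ hs, gaussianReal_map_div_const,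
    zero_div, div_self hv]

theorem gaussCDF_lt_gaussCDF_iff {y z s t : ℝ} (hs : 0 < s) (ht : 0 < t) :
    gaussCDF y s < gaussCDF z t ↔ y / s < z / t := by
  have := isOpenPosMeasure_gaussianReal 0 one_ne_zero
  rw [gaussCDF_eq_cdf_div y hs, gaussCDF_eq_cdf_div z ht, (strictMono_cdf _).lt_iff_lt]

theorem strictMonoOn_gaussCDF_mul {σ : ℝ} (hσ : 0 < σ) {h : ℝ → ℝ} {S : Set ℝ}
    (hpos : ∀ y ∈ S, 0 < h y) (hmono : StrictMonoOn (fun y ↦ y / h y) S) :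
    StrictMonoOn (fun y ↦ gaussCDF y (σ * h y)) S := by
  intro a ha b hb hab
  rw [gaussCDF_lt_gaussCDF_iff (mul_pos hσ (hpos a ha)) (mul_pos hσ (hpos b hb)),
    div_mul_eq_div_div_swap, div_mul_eq_div_div_swap, div_lt_div_iff_of_pos_right hσ]
  exact hmono ha hb hab

theorem strictMonoOn_div_mul_add {𝕜 : Type*} [Field 𝕜] [LinearOrder 𝕜] [IsStrictOrderedRing 𝕜]
    (k : 𝕜) {c : 𝕜} (hc : 0 < c) :
    StrictMonoOn (fun y ↦ y / (k * y + c)) {y | 0 < k * y + c} := by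
  intro a ha b hb hab
  rw [div_lt_div_iff₀ ha hb]
  linear_combination c * hab

theorem random_limit_normal_stmt8_general
    (σ c K : ℝ) (hσ : 0 < σ) (hc : 0 < c)
    (F : ℝ → ℝ) (hF : ∀ y, F y = gaussCDF y (σ * (K * y + c))) :
    StrictMonoOn F {y | 0 < K * y + c} := by
  obtain rfl : F = fun y ↦ gaussCDF y (σ * (K * y + c)) := funext hF
  exact strictMonoOn_gaussCDF_mul hσ (fun _ hy ↦ hy) (strictMonoOn_div_mul_add K hc)

/-- Theorem 2.3, case 2, negative half-line: for `σ > 0`, `c > 0`, `K < 0` and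
`h(y) = K y + c`, the random limit normal function `F(y) = G(y, σ (K y + c))` is
strictly increasing on `(-∞, 0]`. -/
theorem random_limit_normal_stmt8
    (σ c K : ℝ) (hσ : 0 < σ) (hc : 0 < c) (hK : K < 0)
    (F : ℝ → ℝ) (hF : ∀ y, F y = gaussCDF y (σ * (K * y + c))) :
    StrictMonoOn F (Set.Iic 0) :=
  (random_limit_normal_stmt8_general σ c K hσ hc F hF).mono fun _ hy ↦
    add_pos_of_nonneg_of_pos (mul_nonneg_of_nonpos_of_nonpos hK.le hy) hc
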